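/- arXiv:2507.03606 — 8 statements merged into one kernel-verified Lean document; each statement's English description precedes it below -/
import Mathlib

section
/- Let F : (0,∞) → ℝ be a nondecreasing function that has a point of discontinuity on the right, i.e., there exists t₀ > 0 such that F(t₀⁺) := inf_{t > t₀} F(t) > F(t₀). Then there exist a complete metric space (X,d), a map T : X → X, and a constant τ > 0 such that T is an F-contraction with constant τ, but T is not a Meir-Keeler contraction. -/
/-!
Let `X ⊆ ℝ × ℝ` (sup metric) be the union of the line `{(0, s)}` and the curve
`{(t₀ + exp (-s), s)}`. It is closed, hence complete. Points on different pieces are at distance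
strictly greater than `t₀`, but this distance comes arbitrarily close to `t₀` as `s → ∞`.
Let `T` send the line to `p = (0, 0)` and the curve to `q = (0, t₀)`. If `T x ≠ T y`, then
`dist (T x) (T y) = t₀ < dist x y`, so the jump of `F` at `t₀` gives the `F`-contraction
inequality with `τ = F(t₀⁺) - F(t₀)`, while the Meir-Keeler condition fails at `ε = t₀`.
-/

/-- If `F : (0,∞) → ℝ` is nondecreasing and has a point of right
discontinuity (`F(t₀⁺) := inf_{t > t₀} F t > F t₀` for some `t₀ > 0`), then there
exist a complete metric space `X`, a map `T : X → X` and `τ > 0` such that `T` is an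
`F`-contraction with constant `τ` but `T` is not a Meir-Keeler contraction. -/
theorem stmt_0 (F : ℝ → ℝ) (hF : ∀ s t : ℝ, 0 < s → s ≤ t → F s ≤ F t)
    (t₀ : ℝ) (ht₀ : 0 < t₀) (hdisc : F t₀ < sInf (F '' Set.Ioi t₀)) :
    ∃ (X : Type) (_ : MetricSpace X), CompleteSpace X ∧
      ∃ (T : X → X) (τ : ℝ), 0 < τ ∧
        (∀ x y : X, 0 < dist (T x) (T y) →
          τ + F (dist (T x) (T y)) ≤ F (dist x y)) ∧
        ¬ (∀ ε : ℝ, 0 < ε → ∃ δ : ℝ, 0 < δ ∧ ∀ x y : X,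
            ε ≤ dist x y → dist x y < ε + δ → dist (T x) (T y) < ε) := by
  have hbdd : BddBelow (F '' Set.Ioi t₀) := by
    refine ⟨F t₀, ?_⟩
    rintro _ ⟨t, ht, rfl⟩
    exact hF t₀ t ht₀ (le_of_lt ht)
  have hjump : ∀ t, t₀ < t → sInf (F '' Set.Ioi t₀) ≤ F t := fun t ht =>
    csInf_le hbdd ⟨t, ht, rfl⟩
  let S : Set (ℝ × ℝ) := {z | z.1 = 0 ∨ z.1 = t₀ + Real.exp (-z.2)}
  have hS : IsClosed S :=
    (isClosed_eq (by fun_prop) (by fun_prop)).union (isClosed_eq (by fun_prop) (by fun_prop))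
  let p : S := ⟨(0, 0), Or.inl rfl⟩
  let q : S := ⟨(0, t₀), Or.inl rfl⟩
  have hpq : dist p q = t₀ := by
    simp [p, q, Subtype.dist_eq, Prod.dist_eq, Real.dist_eq, abs_of_pos ht₀, ht₀.le]
  have hfar : ∀ x y : S, x.1.1 = 0 → y.1.1 ≠ 0 → t₀ < dist x y := by
    intro x y hx hy
    have hy' : y.1.1 = t₀ + Real.exp (-y.1.2) := y.2.resolve_left hy
    have hpos := Real.exp_pos (-y.1.2)
    calc t₀ < |x.1.1 - y.1.1| := by
          rw [hx, hy', zero_sub, abs_neg, abs_of_pos (by positivity)]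
          linarith
      _ ≤ dist x y := le_max_left _ _
  refine ⟨S, inferInstance, hS.completeSpace_coe, fun z => if z.1.1 = 0 then p else q,
    sInf (F '' Set.Ioi t₀) - F t₀, sub_pos.2 hdisc, ?_, ?_⟩
  · intro x y h
    by_cases hx : x.1.1 = 0 <;> by_cases hy : y.1.1 = 0 <;>
      simp only [hx, hy, if_true, if_false, dist_self, lt_irrefl] at h ⊢
    · rw [hpq]
      linarith [hjump _ (hfar x y hx hy)]
    · rw [dist_comm q p, hpq, dist_comm x y]
      linarith [hjump _ (hfar y x hy hx)]
  · intro hMK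
    obtain ⟨δ, hδ, h⟩ := hMK t₀ ht₀
    -- At height `s = -log (δ / 2)` the two pieces are at distance `t₀ + δ / 2`.
    let x : S := ⟨(0, -Real.log (δ / 2)), Or.inl rfl⟩
    let y : S := ⟨(t₀ + δ / 2, -Real.log (δ / 2)), Or.inr (by
      simp only [neg_neg]
      rw [Real.exp_log (by positivity)])⟩
    have hy : y.1.1 ≠ 0 := by
      change t₀ + δ / 2 ≠ 0
      positivity
    have hxy : dist x y = t₀ + δ / 2 := by
      have hpos : 0 < t₀ + δ / 2 := by positivity
      change max (dist (0 : ℝ) (t₀ + δ / 2)) (dist (-Real.log (δ / 2)) (-Real.log (δ / 2))) = _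
      rw [dist_self, Real.dist_eq, zero_sub, abs_neg, abs_of_pos hpos, max_eq_left hpos.le]
    have hT := h x y (by linarith) (by linarith)
    have hx : x.1.1 = 0 := rfl
    simp only [hx, hy, if_true, if_false, hpq, lt_irrefl] at hT
end

section
/- Let F : (0,∞) → ℝ be nondecreasing with a point t₀ > 0 of discontinuity on the right, and set τ := F(t₀⁺) − F(t₀) > 0 where F(t₀⁺) := inf_{t > t₀} F(t). Let k = ⌊2t₀⌋ + 1 and let (γ_m)_{m≥1} satisfy 0 < γ_m < k − 2t₀ for all m ≥ 1. Define X = A ∪ B ⊆ ℝ with the usual metric, where A = {0} ∪ {t₀} ∪ {k·n : n ≥ 1} and B = {k·m + t₀ + γ_m : m ≥ 1}, and define T : X → X by Tx = 0 for x ∈ A and Tx = t₀ for x ∈ B. Then T is an F-contraction with constant τ, i.e., for all x, y ∈ X with d(Tx,Ty) > 0, τ + F(d(Tx,Ty)) ≤ F(d(x,y)). -/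
/-!
The image of `T` is contained in `{0, t₀}`, so `d(Tx, Ty) > 0` forces one of `x, y` to lie in `A`
and the other in `B`, and then `d(Tx, Ty) = t₀`. Since `τ + F(t₀) = F(t₀⁺)`, it suffices that points
of `A` and `B` are more than `t₀` apart (`lt_abs_sub_of_mem`): a point of `B` exceeds `k * m` by
`t₀ + γ m`, which is more than `t₀`, and falls short of `k * (m + 1)` by `k - t₀ - γ m`, which is
also more than `t₀` because `γ m < k - 2 * t₀`.
-/

/-- Points of `A` and `B` are more than `t₀` apart. Of the choice `k = ⌊2 * t₀⌋ + 1`, only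
`2 * t₀ < k` matters. -/
lemma lt_abs_sub_of_mem {t₀ k g a : ℝ} (ht₀ : 0 < t₀) (hk : 2 * t₀ < k) {m : ℕ} (hm : 1 ≤ m)
    (hg : 0 < g) (hg' : g < k - 2 * t₀)
    (ha : a ∈ ({0, t₀} ∪ {x : ℝ | ∃ n : ℕ, 1 ≤ n ∧ x = k * n} : Set ℝ)) :
    t₀ < |a - (k * m + t₀ + g)| := by
  have hm' : (1 : ℝ) ≤ m := by exact_mod_cast hm
  have hkm : k ≤ k * m := le_mul_of_one_le_right (by linarith) hm'
  rw [lt_abs]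
  rcases ha with (rfl | rfl) | ⟨n, -, rfl⟩
  · right; linarith
  · right; linarith
  · rcases le_or_gt n m with h | h
    · have h' : (n : ℝ) ≤ m := by exact_mod_cast h
      have := mul_le_mul_of_nonneg_left h' (by linarith : 0 ≤ k)
      right; linarith
    · have h' : (m : ℝ) + 1 ≤ n := by exact_mod_cast h
      have := mul_le_mul_of_nonneg_left h' (by linarith : 0 ≤ k)
      left; linarith

/-- With `F` nondecreasing on `(0,∞)` having a right discontinuity at
`t₀ > 0`, `τ := F(t₀⁺) − F(t₀)`, `k = ⌊2t₀⌋ + 1`, `0 < γ m < k − 2t₀`,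
`X = A ∪ B ⊆ ℝ` with the usual metric where `A = {0} ∪ {t₀} ∪ {k·n : n ≥ 1}` and
`B = {k·m + t₀ + γ m : m ≥ 1}`, and `T : X → X` sending `A` to `0` and `B` to `t₀`,
the map `T` is an `F`-contraction with constant `τ`. -/
theorem stmt_3 (F : ℝ → ℝ) (hF : ∀ s t : ℝ, 0 < s → s ≤ t → F s ≤ F t)
    (t₀ : ℝ) (ht₀ : 0 < t₀)
    (hdisc : F t₀ < sInf (F '' Set.Ioi t₀))
    (τ : ℝ) (hτ : τ = sInf (F '' Set.Ioi t₀) - F t₀)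
    (k : ℝ) (hk : k = (⌊2 * t₀⌋ : ℝ) + 1)
    (γ : ℕ → ℝ) (hγ : ∀ m : ℕ, 1 ≤ m → 0 < γ m ∧ γ m < k - 2 * t₀)
    (A B : Set ℝ)
    (hA : A = {0, t₀} ∪ {x : ℝ | ∃ n : ℕ, 1 ≤ n ∧ x = k * n})
    (hB : B = {x : ℝ | ∃ m : ℕ, 1 ≤ m ∧ x = k * m + t₀ + γ m})
    (T : ↥(A ∪ B) → ↥(A ∪ B))
    (hTA : ∀ x : ↥(A ∪ B), (x : ℝ) ∈ A → (T x : ℝ) = 0)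
    (hTB : ∀ x : ↥(A ∪ B), (x : ℝ) ∈ B → (T x : ℝ) = t₀) :
    ∀ x y : ↥(A ∪ B), 0 < dist (T x) (T y) →
      τ + F (dist (T x) (T y)) ≤ F (dist x y) := by
  have hk2 : 2 * t₀ < k := hk ▸ Int.lt_floor_add_one _
  have hbdd : BddBelow (F '' Set.Ioi t₀) := by
    refine ⟨F t₀, ?_⟩
    rintro _ ⟨s, hs, rfl⟩
    exact hF _ _ ht₀ (le_of_lt hs)
  have key : ∀ x y : ↥(A ∪ B), (x : ℝ) ∈ A → (y : ℝ) ∈ B →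
      τ + F (dist (T x) (T y)) ≤ F (dist x y) := by
    intro x y hx hy
    have hd : dist (T x) (T y) = t₀ := by
      rw [Subtype.dist_eq, hTA x hx, hTB y hy, Real.dist_eq, zero_sub, abs_neg, abs_of_pos ht₀]
    have hlt : t₀ < dist x y := by
      obtain ⟨m, hm, hy⟩ := hB.subset hy
      rw [Subtype.dist_eq, Real.dist_eq, hy]
      exact lt_abs_sub_of_mem ht₀ hk2 hm (hγ m hm).1 (hγ m hm).2 (hA.subset hx)
    have := csInf_le hbdd (Set.mem_image_of_mem F hlt)
    rw [hd]
    linarith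
  intro x y hpos
  rcases x.2 with hx | hx <;> rcases y.2 with hy | hy
  · rw [Subtype.dist_eq, hTA x hx, hTA y hy, dist_self] at hpos
    exact absurd hpos (lt_irrefl _)
  · exact key x y hx hy
  · rw [dist_comm (T x), dist_comm x]
    exact key y x hy hx
  · rw [Subtype.dist_eq, hTB x hx, hTB y hy, dist_self] at hpos
    exact absurd hpos (lt_irrefl _)
end

section
/- Let t₀ > 0, let k = ⌊2t₀⌋ + 1, and let (γ_m)_{m≥1} satisfy 0 < γ_m < k − 2t₀ for all m ≥ 1 and γ_m → 0 as m → ∞. Define X = A ∪ B ⊆ ℝ with the usual metric, where A = {0} ∪ {t₀} ∪ {k·n : n ≥ 1} and B = {k·m + t₀ + γ_m : m ≥ 1}, and define T : X → X by Tx = 0 for x ∈ A and Tx = t₀ for x ∈ B. Then T is not a Meir-Keeler contraction; in fact, for ε = t₀ and every δ > 0 there exist x, y ∈ X with t₀ ≤ d(x,y) < t₀ + δ and d(Tx,Ty) ≥ t₀ (take x = k·n and y = k·n + t₀ + γ_n for n sufficiently large). -/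
/-!
The points `k * n ∈ A` and `k * n + t₀ + γ n ∈ B` lie at distance `t₀ + γ n`, which exceeds `t₀`
and tends to it as `n → ∞`, while their images `0` and `t₀` always lie at distance exactly `t₀`.
Hence no `δ` can satisfy the Meir-Keeler condition at `ε = t₀`.
-/

/-- With `t₀ > 0`, `k = ⌊2t₀⌋ + 1`, `0 < γ m < k − 2t₀` and `γ m → 0`,
`X = A ∪ B ⊆ ℝ` with the usual metric where `A = {0} ∪ {t₀} ∪ {k·n : n ≥ 1}` and
`B = {k·m + t₀ + γ m : m ≥ 1}`, and `T : X → X` sending `A` to `0` and `B` to `t₀`,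
the map `T` is not a Meir-Keeler contraction: for `ε = t₀` and every `δ > 0` there
are `x, y ∈ X` with `t₀ ≤ d(x,y) < t₀ + δ` and `d(Tx,Ty) ≥ t₀`. -/
theorem stmt_4 (t₀ : ℝ) (ht₀ : 0 < t₀) (k : ℝ) (hk : k = (⌊2 * t₀⌋ : ℝ) + 1)
    (γ : ℕ → ℝ) (hγ : ∀ m : ℕ, 1 ≤ m → 0 < γ m ∧ γ m < k - 2 * t₀)
    (hγ0 : Filter.Tendsto γ Filter.atTop (nhds 0))
    (A B : Set ℝ)
    (hA : A = {0, t₀} ∪ {x : ℝ | ∃ n : ℕ, 1 ≤ n ∧ x = k * n})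
    (hB : B = {x : ℝ | ∃ m : ℕ, 1 ≤ m ∧ x = k * m + t₀ + γ m})
    (T : ↥(A ∪ B) → ↥(A ∪ B))
    (hTA : ∀ x : ↥(A ∪ B), (x : ℝ) ∈ A → (T x : ℝ) = 0)
    (hTB : ∀ x : ↥(A ∪ B), (x : ℝ) ∈ B → (T x : ℝ) = t₀) :
    (∀ δ : ℝ, 0 < δ → ∃ x y : ↥(A ∪ B),
        t₀ ≤ dist x y ∧ dist x y < t₀ + δ ∧ t₀ ≤ dist (T x) (T y)) ∧
    ¬ (∀ ε : ℝ, 0 < ε → ∃ δ : ℝ, 0 < δ ∧ ∀ x y : ↥(A ∪ B),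
        ε ≤ dist x y → dist x y < ε + δ → dist (T x) (T y) < ε) := by
  have key : ∀ δ : ℝ, 0 < δ → ∃ x y : ↥(A ∪ B),
      t₀ ≤ dist x y ∧ dist x y < t₀ + δ ∧ t₀ ≤ dist (T x) (T y) := by
    intro δ hδ
    obtain ⟨n, hnδ, hn⟩ :=
      ((hγ0.eventually_lt_const hδ).and (Filter.eventually_ge_atTop 1)).exists
    have hγn := (hγ n hn).1
    have hxA : k * n ∈ A := by
      rw [hA]
      exact Or.inr ⟨n, hn, rfl⟩
    have hyB : k * n + t₀ + γ n ∈ B := by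
      rw [hB]
      exact ⟨n, hn, rfl⟩
    let x : ↥(A ∪ B) := ⟨k * n, Or.inl hxA⟩
    let y : ↥(A ∪ B) := ⟨k * n + t₀ + γ n, Or.inr hyB⟩
    have hd : dist x y = t₀ + γ n := by
      rw [Subtype.dist_eq, dist_comm, Real.dist_eq,
        show (y : ℝ) - x = t₀ + γ n by simp only [x, y]; ring]
      exact abs_of_pos (by linarith)
    have hT : dist (T x) (T y) = t₀ := by
      rw [Subtype.dist_eq, hTA x hxA, hTB y hyB, dist_comm, Real.dist_eq, sub_zero,
        abs_of_pos ht₀]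
    exact ⟨x, y, by linarith, by linarith, hT.ge⟩
  refine ⟨key, fun h => ?_⟩
  obtain ⟨δ, hδ, hMK⟩ := h t₀ ht₀
  obtain ⟨x, y, h₁, h₂, h₃⟩ := key δ hδ
  exact absurd (hMK x y h₁ h₂) h₃.not_gt
end

section
/- Let F : (0,∞) → ℝ be nondecreasing and φ : (0,∞) → (0,∞) be such that for every t > 0 and every sequence (t_n) with t_n > t for all n and t_n → t, one has limsup_n φ(t_n) > F(t⁺) − F(t), where F(t⁺) := inf_{s > t} F(s). Let (X,d) be a complete metric space and let T : X → X be a (φ,F)-contraction. Then T is a Meir-Keeler contraction. -/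
/-!
If the Meir-Keeler condition fails at `ε`, there are pairs `(xₙ, yₙ)` with `ε ≤ dₙ := d(xₙ, yₙ)`,
`dₙ → ε` and `d(T xₙ, T yₙ) ≥ ε`. Monotonicity of `F` and the contraction inequality give
`φ(dₙ) ≤ F(dₙ) - F(ε)`; positivity of `φ` then forces `dₙ > ε`, and for each `s > ε` eventually
`φ(dₙ) ≤ F(s) - F(ε)`. Hence `limsup φ(dₙ) ≤ F(ε⁺) - F(ε)`, contrary to the hypothesis on `φ`.
-/

open Filter in
/-- Let `F : (0,∞) → ℝ` be nondecreasing and `φ : (0,∞) → (0,∞)` be such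
that for every `t > 0` and every sequence `tₙ → t` with `tₙ > t`, one has
`limsup φ(tₙ) > F(t⁺) − F(t)` where `F(t⁺) = inf_{s > t} F s`. Then every
`(φ,F)`-contraction on a complete metric space is a Meir-Keeler contraction. -/
theorem stmt_6 (F φ : ℝ → ℝ) (hF : ∀ s t : ℝ, 0 < s → s ≤ t → F s ≤ F t)
    (hφpos : ∀ t : ℝ, 0 < t → 0 < φ t)
    (hlim : ∀ t : ℝ, 0 < t → ∀ u : ℕ → ℝ, (∀ n, t < u n) →
      Tendsto u atTop (nhds t) →
      sInf (F '' Set.Ioi t) - F t < limsup (fun n => φ (u n)) atTop)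
    {X : Type*} [MetricSpace X] [CompleteSpace X] (T : X → X)
    (hT : ∀ x y : X, T x ≠ T y →
      φ (dist x y) + F (dist (T x) (T y)) ≤ F (dist x y)) :
    ∀ ε : ℝ, 0 < ε → ∃ δ : ℝ, 0 < δ ∧ ∀ x y : X,
      ε ≤ dist x y → dist x y < ε + δ → dist (T x) (T y) < ε := by
  intro ε hε
  by_contra! hcon
  choose x y hle hlt hge using fun n : ℕ =>
    hcon (1 / ((n : ℝ) + 1)) Nat.one_div_pos_of_nat
  have key : ∀ n, φ (dist (x n) (y n)) + F ε ≤ F (dist (x n) (y n)) := fun n => by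
    have hne : T (x n) ≠ T (y n) := dist_pos.1 (hε.trans_le (hge n))
    linarith [hT _ _ hne, hF _ _ hε (hge n)]
  -- The value `dist = ε` is excluded, since it would give `φ ε ≤ 0`.
  have hgt : ∀ n, ε < dist (x n) (y n) := fun n => by
    refine lt_of_le_of_ne (hle n) fun h => ?_
    have := key n
    rw [← h] at this
    linarith [hφpos ε hε]
  have htend : Tendsto (fun n => dist (x n) (y n)) atTop (nhds ε) := by
    refine tendsto_of_tendsto_of_tendsto_of_le_of_le tendsto_const_nhds ?_ hle
      fun n => (hlt n).le
    simpa using (tendsto_one_div_add_atTop_nhds_zero_nat (𝕜 := ℝ)).const_add ε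
  have hL := hlim ε hε _ hgt htend
  obtain ⟨_, ⟨s, hs, rfl⟩, hsL⟩ := exists_lt_of_csInf_lt
    (Set.nonempty_Ioi.image F) (sub_lt_iff_lt_add.1 hL)
  have hbound : limsup (fun n => φ (dist (x n) (y n))) atTop ≤ F s - F ε := by
    -- In `ℝ` the limsup is only meaningful with a lower bound; positivity of `φ` supplies it.
    refine limsup_le_of_le (IsCoboundedUnder.of_frequently_ge (a := 0)
      (Frequently.of_forall fun n => (hφpos _ (hε.trans (hgt n))).le)) ?_
    filter_upwards [htend.eventually_lt_const hs] with n hn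
    linarith [key n, hF _ _ (hε.trans (hgt n)) hn.le]
  linarith
end

section
/- Let F : (0,∞) → ℝ be nondecreasing and continuous from the right, and let φ : (0,∞) → (0,∞) be lower semicontinuous. Let (X,d) be a complete metric space and let T : X → X be a (φ,F)-contraction. Then T is a Meir-Keeler contraction. -/
/-!
If `t = dist x y` is close to `ε` from the right and `dist (T x) (T y) ≥ ε`, then monotonicity of
`F` and the contraction inequality give `F ε ≤ F t - φ t`. As `t` decreases to `ε`, right
continuity of `F` and lower semicontinuity of `φ` bound the limit superior of the right-hand side
by `F ε - φ ε < F ε`, which is a contradiction on some interval `[ε, ε + δ)`.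
-/

/-- Let `F : (0,∞) → ℝ` be nondecreasing and continuous from the right,
and `φ : (0,∞) → (0,∞)` lower semicontinuous. Then every `(φ,F)`-contraction on a
complete metric space is a Meir-Keeler contraction. -/
theorem stmt_7 (F φ : ℝ → ℝ) (hF : ∀ s t : ℝ, 0 < s → s ≤ t → F s ≤ F t)
    (hFr : ∀ t : ℝ, 0 < t → Filter.Tendsto F (nhdsWithin t (Set.Ioi t)) (nhds (F t)))
    (hφpos : ∀ t : ℝ, 0 < t → 0 < φ t)
    (hφlsc : LowerSemicontinuousOn φ (Set.Ioi 0))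
    {X : Type*} [MetricSpace X] [CompleteSpace X] (T : X → X)
    (hT : ∀ x y : X, T x ≠ T y →
      φ (dist x y) + F (dist (T x) (T y)) ≤ F (dist x y)) :
    ∀ ε : ℝ, 0 < ε → ∃ δ : ℝ, 0 < δ ∧ ∀ x y : X,
      ε ≤ dist x y → dist x y < ε + δ → dist (T x) (T y) < ε := by
  intro ε hε
  have hpos := hφpos ε hε
  -- Just to the right of `ε`, lower semicontinuity keeps `φ` above `φ ε / 2`, while right
  -- continuity keeps `F` below `F ε + φ ε / 2`; hence `F t - φ t < F ε` there.
  have hφ : ∀ᶠ t in nhdsWithin ε (Set.Ici ε), φ ε / 2 < φ t :=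
    (hφlsc ε hε (φ ε / 2) (by linarith)).filter_mono
      (nhdsWithin_mono ε fun t ht => lt_of_lt_of_le hε ht)
  have hFε : ∀ᶠ t in nhdsWithin ε (Set.Ici ε), F t < F ε + φ ε / 2 := by
    have hcont : ContinuousWithinAt F (Set.Ici ε) ε :=
      continuousWithinAt_Ioi_iff_Ici.mp (hFr ε hε)
    exact hcont.eventually (gt_mem_nhds (by linarith))
  obtain ⟨u, hu, hsub⟩ := mem_nhdsGE_iff_exists_Ico_subset.mp (hφ.and hFε)
  have hu' : ε < u := hu
  refine ⟨u - ε, by linarith, fun x y hxy hlt => ?_⟩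
  by_contra! hge
  obtain ⟨h1, h2⟩ := hsub (show dist x y ∈ Set.Ico ε u from ⟨hxy, by linarith⟩)
  have hne : T x ≠ T y := dist_pos.mp (lt_of_lt_of_le hε hge)
  -- Monotonicity gives `F ε ≤ F (dist (T x) (T y))`, against the contraction inequality.
  linarith [hT x y hne, hF ε _ hε hge]
end

section
/- Define F : (0,∞) → ℝ by F(t) = 5/2 for 0 < t < 1/2 and F(t) = (1 + t²)/t for t ≥ 1/2, and let E = λ·F where 0 < λ < 4/5. Then the pair (E,F) satisfies condition (C₁) (i.e., t ≤ s implies E(t) < F(s) for t, s > 0), and neither E nor F is monotone on (0,∞). -/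
/-!
The function `F` satisfies `F ≥ 2` on `(0, ∞)` by AM-GM, `F ≤ 5/2` on `(0, 2]`, and is
nondecreasing on `[2, ∞)`. Hence for `t ≤ 2` one has `l * F t < (4/5) * (5/2) = 2 ≤ F s`, and for
`2 < t ≤ s` one has `l * F t < F t ≤ F s`. Monotonicity of either kind fails because
`F (1/2) = 5/2 > F 1 = 2 < F 3 = 10/3`, and `E` is a positive multiple of `F`.
-/

/-- For `F(t) = 5/2` on `(0,1/2)` and `F(t) = (1+t²)/t` for `t ≥ 1/2`,
and `E = λ·F` with `0 < λ < 4/5`, the pair `(E,F)` satisfies condition `(C₁)`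
(`t ≤ s → E t < F s` for `t, s > 0`), and neither `E` nor `F` is monotone on `(0,∞)`. -/
theorem stmt_10 (l : ℝ) (hl : 0 < l) (hl' : l < 4 / 5) (F E : ℝ → ℝ)
    (hF₁ : ∀ t : ℝ, 0 < t → t < 1 / 2 → F t = 5 / 2)
    (hF₂ : ∀ t : ℝ, 1 / 2 ≤ t → F t = (1 + t ^ 2) / t)
    (hE : ∀ t : ℝ, E t = l * F t) :
    (∀ t s : ℝ, 0 < t → t ≤ s → E t < F s) ∧
    ¬ MonotoneOn F (Set.Ioi (0 : ℝ)) ∧ ¬ AntitoneOn F (Set.Ioi (0 : ℝ)) ∧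
    ¬ MonotoneOn E (Set.Ioi (0 : ℝ)) ∧ ¬ AntitoneOn E (Set.Ioi (0 : ℝ)) := by
  have F_ge_two : ∀ s : ℝ, 0 < s → 2 ≤ F s := by
    intro s hs
    rcases lt_or_ge s (1 / 2) with h | h
    · rw [hF₁ s hs h]; norm_num
    · rw [hF₂ s h, le_div_iff₀ hs]
      nlinarith [sq_nonneg (s - 1)]
  have F_le : ∀ t : ℝ, 0 < t → t ≤ 2 → F t ≤ 5 / 2 := by
    intro t ht ht2
    rcases lt_or_ge t (1 / 2) with h | h
    · rw [hF₁ t ht h]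
    -- `1 + t² ≤ (5/2) t` is `(t - 1/2) (2 - t) ≥ 0`
    · rw [hF₂ t h, div_le_iff₀ ht]
      nlinarith [mul_nonneg (sub_nonneg.2 h) (sub_nonneg.2 ht2)]
  have F_mono : ∀ t s : ℝ, 2 ≤ t → t ≤ s → F t ≤ F s := by
    intro t s ht hts
    -- after clearing denominators the difference of the two sides is `(s - t) (t s - 1)`
    rw [hF₂ t (by linarith), hF₂ s (by linarith), div_le_div_iff₀ (by linarith) (by linarith)]
    have hts1 : 0 ≤ t * s - 1 := by nlinarith
    nlinarith [mul_nonneg (sub_nonneg.2 hts) hts1]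
  have F_half : F (1 / 2) = 5 / 2 := by rw [hF₂ _ le_rfl]; norm_num
  have F_one : F 1 = 2 := by rw [hF₂ _ (by norm_num)]; norm_num
  have F_three : F 3 = 10 / 3 := by rw [hF₂ _ (by norm_num)]; norm_num
  have half_mem : (1 / 2 : ℝ) ∈ Set.Ioi (0 : ℝ) := by norm_num
  have one_mem : (1 : ℝ) ∈ Set.Ioi (0 : ℝ) := by norm_num
  have three_mem : (3 : ℝ) ∈ Set.Ioi (0 : ℝ) := by norm_num
  refine ⟨?_, ?_, ?_, ?_, ?_⟩
  · intro t s ht hts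
    rw [hE]
    rcases le_total t 2 with h | h
    · nlinarith [F_ge_two s (by linarith), F_ge_two t ht, F_le t ht h]
    · nlinarith [F_ge_two t ht, F_mono t s h hts]
  · intro h
    have := h half_mem one_mem (by norm_num)
    linarith
  · intro h
    have := h one_mem three_mem (by norm_num)
    linarith
  · intro h
    have := h half_mem one_mem (by norm_num)
    rw [hE, hE, F_half, F_one] at this
    linarith
  · intro h
    have := h one_mem three_mem (by norm_num)
    rw [hE, hE, F_one, F_three] at this
    linarith
end

section
/- Let E, F : (0,∞) → ℝ satisfy condition (C₁) (for all t, s > 0, t ≤ s implies E(t) < F(s)). Suppose F is nondecreasing and for every t > 0 and every sequence (t_n) with t_n > t for all n and t_n → t, one has liminf_n E(t_n) < F(t). If T is an (E,F)-contraction on a complete metric space (X,d), then T is a Meir-Keeler contraction. -/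
/-!
If the Meir-Keeler condition fails at `ε`, there are pairs `xₙ, yₙ` with
`ε ≤ d(xₙ, yₙ) < ε + 1/(n+1)` and `d(T xₙ, T yₙ) ≥ ε`. Monotonicity of `F` and the contraction
inequality give `F ε ≤ E (d(xₙ, yₙ))`, and `(C₁)` at `t = s = ε` then excludes `d(xₙ, yₙ) = ε`.
So `d(xₙ, yₙ)` tends to `ε` strictly from above while `E` stays at least `F ε` along it,
contradicting the hypothesis on the lower limit.
-/

open Filter in
/-- Let `(E,F)` satisfy condition `(C₁)`, `F` nondecreasing on `(0,∞)`,
and suppose for every `t > 0` and every sequence `tₙ → t` with `tₙ > t` one has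
`liminf E(tₙ) < F t`. Then every `(E,F)`-contraction on a complete metric space is a
Meir-Keeler contraction. -/
theorem stmt_12 (E F : ℝ → ℝ)
    (hC₁ : ∀ t s : ℝ, 0 < t → 0 < s → t ≤ s → E t < F s)
    (hF : ∀ s t : ℝ, 0 < s → s ≤ t → F s ≤ F t)
    (hlim : ∀ t : ℝ, 0 < t → ∀ u : ℕ → ℝ, (∀ n, t < u n) →
      Tendsto u atTop (nhds t) → liminf (fun n => E (u n)) atTop < F t)
    {X : Type*} [MetricSpace X] [CompleteSpace X] (T : X → X)
    (hT : ∀ x y : X, T x ≠ T y → F (dist (T x) (T y)) ≤ E (dist x y)) :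
    ∀ ε : ℝ, 0 < ε → ∃ δ : ℝ, 0 < δ ∧ ∀ x y : X,
      ε ≤ dist x y → dist x y < ε + δ → dist (T x) (T y) < ε := by
  intro ε hε
  by_contra! hcon
  choose x y hle hlt hge using fun n : ℕ => hcon (1 / ((n : ℝ) + 1)) Nat.one_div_pos_of_nat
  have hE : ∀ n, F ε ≤ E (dist (x n) (y n)) := fun n =>
    (hF _ _ hε (hge n)).trans (hT _ _ (dist_pos.1 (hε.trans_le (hge n))))
  have hgt : ∀ n, ε < dist (x n) (y n) := by
    intro n
    refine lt_of_le_of_ne (hle n) fun h => ?_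
    have h1 := hE n
    rw [← h] at h1
    exact absurd (hC₁ ε ε hε hε le_rfl) (not_lt.2 h1)
  have hto : Tendsto (fun n => dist (x n) (y n)) atTop (nhds ε) := by
    refine tendsto_of_tendsto_of_tendsto_of_le_of_le tendsto_const_nhds ?_ hle
      (fun n => (hlt n).le)
    simpa using (tendsto_one_div_add_atTop_nhds_zero_nat (𝕜 := ℝ)).const_add ε
  -- The real-valued `liminf` is meaningful only because `(C₁)` bounds `E` above by `F (ε + 1)`.
  have hub : ∀ n, E (dist (x n) (y n)) ≤ F (ε + 1) := by
    intro n
    have h1 : 1 / ((n : ℝ) + 1) ≤ 1 := by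
      rw [div_le_one (by positivity)]
      linarith [(Nat.cast_nonneg n : (0 : ℝ) ≤ n)]
    exact (hC₁ _ _ (hε.trans (hgt n)) (by linarith) (by linarith [hlt n])).le
  refine absurd (hlim ε hε _ hgt hto) (not_lt.2 ?_)
  exact le_liminf_of_le
    (isBoundedUnder_of ⟨F (ε + 1), hub⟩).isCoboundedUnder_ge
    (Eventually.of_forall hE)
end

section
/- Let E, F : (0,∞) → ℝ satisfy condition (C₁) (for all t, s > 0, t ≤ s implies E(t) < F(s)). Suppose F is continuous on the right and for every t > 0 and every sequence (t_n) with t_n ≥ t for all n and t_n → t, one has liminf_n E(t_n) < F(t). If T is an (E,F)-contraction on a complete metric space (X,d), then T is a Meir-Keeler contraction. -/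
/-!
If the Meir-Keeler condition fails at `ε`, there are pairs `(xₙ, yₙ)` with `dist xₙ yₙ → ε` from
the right and `ε ≤ dist (T xₙ) (T yₙ)`. Condition `(C₁)` makes `T` distance-nonincreasing on these
pairs, so `dist (T xₙ) (T yₙ) → ε` from the right as well. Then
`F (dist (T xₙ) (T yₙ)) ≤ E (dist xₙ yₙ) ≤ F (dist xₙ yₙ)`, and right-continuity of `F` squeezes
`E (dist xₙ yₙ)` to `F ε`. Its `liminf` is therefore `F ε`, against the hypothesis on `E`.
-/

open Filter in
/-- Let `(E,F)` satisfy condition `(C₁)`, `F` continuous on the right,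
and suppose for every `t > 0` and every sequence `tₙ → t` with `tₙ ≥ t` one has
`liminf E(tₙ) < F t`. Then every `(E,F)`-contraction on a complete metric space is a
Meir-Keeler contraction. -/
theorem stmt_13 (E F : ℝ → ℝ)
    (hC₁ : ∀ t s : ℝ, 0 < t → 0 < s → t ≤ s → E t < F s)
    (hFr : ∀ t : ℝ, 0 < t → Tendsto F (nhdsWithin t (Set.Ioi t)) (nhds (F t)))
    (hlim : ∀ t : ℝ, 0 < t → ∀ u : ℕ → ℝ, (∀ n, t ≤ u n) →
      Tendsto u atTop (nhds t) → liminf (fun n => E (u n)) atTop < F t)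
    {X : Type*} [MetricSpace X] [CompleteSpace X] (T : X → X)
    (hT : ∀ x y : X, T x ≠ T y → F (dist (T x) (T y)) ≤ E (dist x y)) :
    ∀ ε : ℝ, 0 < ε → ∃ δ : ℝ, 0 < δ ∧ ∀ x y : X,
      ε ≤ dist x y → dist x y < ε + δ → dist (T x) (T y) < ε := by
  intro ε hε
  by_contra! hcon
  choose x y hle hlt hge using fun n : ℕ => hcon (1 / ((n : ℝ) + 1)) Nat.one_div_pos_of_nat
  -- The contraction inequality holds along the sequence because `T (x n) ≠ T (y n)`.
  have hFE : ∀ n, F (dist (T (x n)) (T (y n))) ≤ E (dist (x n) (y n)) := fun n =>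
    hT _ _ (dist_pos.1 (hε.trans_le (hge n)))
  -- Otherwise `(C₁)` would contradict `hFE`.
  have hdist : ∀ n, dist (T (x n)) (T (y n)) ≤ dist (x n) (y n) := fun n => by
    by_contra! h
    exact (hC₁ _ _ (hε.trans_le (hle n)) (hε.trans_le (hge n)) h.le).not_ge (hFE n)
  have hu : Tendsto (fun n => dist (x n) (y n)) atTop (nhds ε) := by
    have hup : Tendsto (fun n : ℕ => ε + 1 / ((n : ℝ) + 1)) atTop (nhds ε) := by
      simpa using tendsto_one_div_add_atTop_nhds_zero_nat.const_add ε
    exact tendsto_of_tendsto_of_tendsto_of_le_of_le tendsto_const_nhds hup hle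
      fun n => (hlt n).le
  have hs : Tendsto (fun n => dist (T (x n)) (T (y n))) atTop (nhds ε) :=
    tendsto_of_tendsto_of_tendsto_of_le_of_le tendsto_const_nhds hu hge hdist
  -- The sequences may take the value `ε` itself, so the closed half-line is needed.
  have hF : Tendsto F (nhdsWithin ε (Set.Ici ε)) (nhds (F ε)) :=
    continuousWithinAt_Ioi_iff_Ici.1 (hFr ε hε)
  have hFu := hF.comp (tendsto_nhdsWithin_iff.2 ⟨hu, Eventually.of_forall hle⟩)
  have hFs := hF.comp (tendsto_nhdsWithin_iff.2 ⟨hs, Eventually.of_forall hge⟩)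
  have hE : Tendsto (fun n => E (dist (x n) (y n))) atTop (nhds (F ε)) :=
    tendsto_of_tendsto_of_tendsto_of_le_of_le hFs hFu hFE fun n =>
      (hC₁ _ _ (hε.trans_le (hle n)) (hε.trans_le (hle n)) le_rfl).le
  exact (hlim ε hε _ hle hu).ne hE.liminf_eq
end
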